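/- The two actions commute (the easy half of quantum Schur–Weyl duality): for every N ≥ 2, every i with 1 ≤ i ≤ N−1 and every j with 1 ≤ j ≤ m−1, the Hecke operator R_i := Id^{⊗(i−1)} ⊗ R ⊗ Id^{⊗(N−i−1)} on V^{⊗N} commutes with each of the iterated-coproduct operators Δ^{(N)}(E_j) = ∑_{k=1}^{N} Id^{⊗(k−1)} ⊗ E_j ⊗ (K_j^{−1})^{⊗(N−k)}, Δ^{(N)}(F_j) = ∑_{k=1}^{N} K_j^{⊗(k−1)} ⊗ F_j ⊗ Id^{⊗(N−k)}, and Δ^{(N)}(L_l) = L_l^{⊗N} for 1 ≤ l ≤ m. -/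

import Mathlib

set_option synthInstance.maxHeartbeats 400000
set_option maxHeartbeats 1000000

noncomputable section

/-- The base field `K = ℚ(q)`. -/
abbrev K : Type := RatFunc ℚ

/-- The variable `q`. -/
def q : K := RatFunc.X

/-- The elementary matrix `E_i` (0-based: single `1` in position `(i, i+1)`). -/
def Emat (M : ℕ) (i : ℕ) : Matrix (Fin M) (Fin M) K :=
  fun a b => if (a : ℕ) = i ∧ (b : ℕ) = i + 1 then 1 else 0

/-- The elementary matrix `F_i` (0-based: single `1` in position `(i+1, i)`). -/
def Fmat (M : ℕ) (i : ℕ) : Matrix (Fin M) (Fin M) K :=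
  fun a b => if (a : ℕ) = i + 1 ∧ (b : ℕ) = i then 1 else 0

/-- The diagonal matrix `L_j` with entry `q` in (0-based) position `j` and `1`
elsewhere. -/
def Lmat (M : ℕ) (j : ℕ) : Matrix (Fin M) (Fin M) K :=
  Matrix.diagonal (fun t => if (t : ℕ) = j then q else 1)

/-- The inverse `L_j⁻¹` of `Lmat`. -/
def LmatInv (M : ℕ) (j : ℕ) : Matrix (Fin M) (Fin M) K :=
  Matrix.diagonal (fun t => if (t : ℕ) = j then q⁻¹ else 1)

/-- The diagonal matrix `K_i = L_i L_{i+1}⁻¹` with entries `q` at position `i`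
and `q⁻¹` at position `i+1` (0-based). -/
def Kmat (M : ℕ) (i : ℕ) : Matrix (Fin M) (Fin M) K :=
  Matrix.diagonal
    (fun t => if (t : ℕ) = i then q else if (t : ℕ) = i + 1 then q⁻¹ else 1)

/-- The inverse `K_i⁻¹` of `Kmat`. -/
def KmatInv (M : ℕ) (i : ℕ) : Matrix (Fin M) (Fin M) K :=
  Matrix.diagonal
    (fun t => if (t : ℕ) = i then q⁻¹ else if (t : ℕ) = i + 1 then q else 1)

/-- The Kronecker product of two `M × M` matrices, acting on `V ⊗ V` with
`V = K^M`: `(A ⊗ B)(eᵢ ⊗ eⱼ) = (A eᵢ) ⊗ (B eⱼ)`. -/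
def kron2 {M : ℕ} (A B : Matrix (Fin M) (Fin M) K) :
    Matrix (Fin M × Fin M) (Fin M × Fin M) K :=
  fun p r => A p.1 r.1 * B p.2 r.2

/-- The matrix (in the standard basis of `V ⊗ V`, `V = K^m`, indices 0-based) of
the `n = 0` R-matrix: `R(eᵢ ⊗ eᵢ) = q⁻¹ eᵢ ⊗ eᵢ`, `R(eᵢ ⊗ eⱼ) = eⱼ ⊗ eᵢ` for
`i < j`, and `R(eᵢ ⊗ eⱼ) = eⱼ ⊗ eᵢ + (q⁻¹ - q) eᵢ ⊗ eⱼ` for `i > j`. -/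
def R0mat (m : ℕ) : Matrix (Fin m × Fin m) (Fin m × Fin m) K :=
  fun p r =>
    if r.1 = r.2 then (if p = r then q⁻¹ else 0)
    else (if p.1 = r.2 ∧ p.2 = r.1 then 1 else 0)
      + (if r.2 < r.1 ∧ p = r then q⁻¹ - q else 0)

/-- The Hecke operator `R_i = Id^{⊗i} ⊗ R ⊗ Id^{⊗(N-i-2)}` on `V^{⊗N}`
(0-based: it acts by the R-matrix on tensor factors `i` and `i+1` and by the
identity elsewhere). -/
def Rop0 (m N : ℕ) (i : ℕ) (h : i + 1 < N) :
    Matrix (Fin N → Fin m) (Fin N → Fin m) K :=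
  fun f g =>
    R0mat m (f ⟨i, Nat.lt_of_succ_lt h⟩, f ⟨i + 1, h⟩)
        (g ⟨i, Nat.lt_of_succ_lt h⟩, g ⟨i + 1, h⟩) *
      ∏ t : Fin N, (if (t : ℕ) = i ∨ (t : ℕ) = i + 1 then 1
        else if f t = g t then 1 else 0)

/-- The operator `B^{⊗(k-1)} ⊗ A ⊗ C^{⊗(N-k)}` on `V^{⊗N}`: `B` on tensor
factors before position `k`, `A` at `k`, and `C` after `k`. -/
def place (m N : ℕ) (B A C : Matrix (Fin m) (Fin m) K) (k : Fin N) :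
    Matrix (Fin N → Fin m) (Fin N → Fin m) K :=
  fun f g => ∏ t : Fin N,
    (if t < k then B (f t) (g t)
     else if t = k then A (f t) (g t) else C (f t) (g t))

/-- The Kronecker power `A^{⊗N}` acting on `V^{⊗N}`. -/
def kpow (m N : ℕ) (A : Matrix (Fin m) (Fin m) K) :
    Matrix (Fin N → Fin m) (Fin N → Fin m) K :=
  fun f g => ∏ t : Fin N, A (f t) (g t)

/-- The iterated coproduct operator
`Δ^{(N)}(E_j) = ∑ₖ Id^{⊗(k-1)} ⊗ E_j ⊗ (K_j⁻¹)^{⊗(N-k)}` on `V^{⊗N}`. -/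
def DeltaEN (m N j : ℕ) : Matrix (Fin N → Fin m) (Fin N → Fin m) K :=
  ∑ k : Fin N, place m N 1 (Emat m j) (KmatInv m j) k

/-- The iterated coproduct operator
`Δ^{(N)}(F_j) = ∑ₖ K_j^{⊗(k-1)} ⊗ F_j ⊗ Id^{⊗(N-k)}` on `V^{⊗N}`. -/
def DeltaFN (m N j : ℕ) : Matrix (Fin N → Fin m) (Fin N → Fin m) K :=
  ∑ k : Fin N, place m N (Kmat m j) (Fmat m j) 1 k

open Matrix
open scoped Kronecker

/-!
Writing `V^{⊗N}` as (the factors `i` and `i + 1`) ⊗ (all other factors) turns `R_i` into `R ⊗ 1` and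
every pure tensor of operators into a Kronecker product. In `Δ^{(N)}(E_j)` the summands `k = i` and
`k = i + 1` agree away from the two factors, where together they act by
`Δ(E_j) = E_j ⊗ K_j⁻¹ + 1 ⊗ E_j`; every other summand acts on them by `1 ⊗ 1` or `K_j⁻¹ ⊗ K_j⁻¹`.
So everything reduces to `N = 2`. There `Δ(E_j)` is checked on basis vectors, and `Δ(F_j)` follows
by transposing: `R` is symmetric, and `Δ(F_j)ᵀ = E_j ⊗ 1 + K_j ⊗ E_j = q Δ(E_j) (K_j ⊗ K_j)`.
-/

section TensorPowers

variable {ι α S : Type*}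

/-- The tensor product `⨂ₜ A t` of a finite family of operators, as a matrix in the basis of
multi-indices `ι → α`. -/
def piKronecker [Fintype ι] [CommMonoid S] (A : ι → Matrix α α S) : Matrix (ι → α) (ι → α) S :=
  of fun f g => ∏ t, A t (f t) (g t)

theorem piKronecker_one [Fintype ι] [CommSemiring S] [DecidableEq α] [DecidableEq (ι → α)] :
    piKronecker (fun _ : ι => (1 : Matrix α α S)) = 1 := by
  ext f g
  simp [piKronecker, one_apply, Finset.prod_ite_zero, funext_iff]

variable [DecidableEq ι] {a b : ι}

/-- Splits a multi-index into its entries at two distinct places and the remaining ones; on basis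
vectors this is `V^{⊗ι} ≃ (V ⊗ V) ⊗ V^{⊗(ι \ {a, b})}`. -/
def splitPair (α : Type*) (hab : a ≠ b) :
    (ι → α) ≃ (α × α) × ({t // t ≠ a ∧ t ≠ b} → α) where
  toFun f := ((f a, f b), fun t => f t)
  invFun x t := if ha : t = a then x.1.1 else if hb : t = b then x.1.2 else x.2 ⟨t, ha, hb⟩
  left_inv f := by grind
  right_inv x := by ext <;> grind

/-- The operator acting by `X` on the tensor factors `a`, `b` and by `Y` on all the others. -/
def pairKronecker [Mul S] (hab : a ≠ b) (X : Matrix (α × α) (α × α) S)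
    (Y : Matrix ({t // t ≠ a ∧ t ≠ b} → α) ({t // t ≠ a ∧ t ≠ b} → α) S) :
    Matrix (ι → α) (ι → α) S :=
  (X ⊗ₖ Y).submatrix (splitPair α hab) (splitPair α hab)

theorem add_pairKronecker [Distrib S] (hab : a ≠ b) (X X' : Matrix (α × α) (α × α) S)
    (Y : Matrix ({t // t ≠ a ∧ t ≠ b} → α) ({t // t ≠ a ∧ t ≠ b} → α) S) :
    pairKronecker hab (X + X') Y = pairKronecker hab X Y + pairKronecker hab X' Y :=
  congrArg (submatrix · _ _) (add_kronecker X X' Y)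

variable [Fintype ι]

@[to_additive]
theorem prod_eq_mul_mul_prod_ne_and_ne [CommMonoid S] (hab : a ≠ b) (x : ι → S) :
    ∏ t, x t = x a * x b * ∏ t : {t // t ≠ a ∧ t ≠ b}, x t := by
  rw [← Finset.prod_pair hab, ← Finset.prod_mul_prod_compl {a, b} x]
  congr 1
  exact Finset.prod_subtype _ (by simp) x

theorem piKronecker_eq_pairKronecker [CommMonoid S] (hab : a ≠ b) (A : ι → Matrix α α S) :
    piKronecker A = pairKronecker hab (A a ⊗ₖ A b) (piKronecker fun t => A t) := by
  ext f g
  exact prod_eq_mul_mul_prod_ne_and_ne hab fun t => A t (f t) (g t)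

variable [CommSemiring S] [Fintype α] [DecidableEq α]

theorem commute_pairKronecker (hab : a ≠ b) {X X' : Matrix (α × α) (α × α) S} (h : Commute X X')
    (Y : Matrix ({t // t ≠ a ∧ t ≠ b} → α) ({t // t ≠ a ∧ t ≠ b} → α) S) :
    Commute (pairKronecker hab X 1) (pairKronecker hab X' Y) := by
  simp only [commute_iff_eq, pairKronecker, submatrix_mul_equiv, ← mul_kronecker_mul, h.eq,
    one_mul, mul_one]

theorem commute_piKronecker (hab : a ≠ b) {X : Matrix (α × α) (α × α) S} {A : ι → Matrix α α S}
    (h : Commute X (A a ⊗ₖ A b)) : Commute (pairKronecker hab X 1) (piKronecker A) := by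
  rw [piKronecker_eq_pairKronecker hab]
  exact commute_pairKronecker hab h _

end TensorPowers

section Coproduct

variable {ι α S : Type*} [LinearOrder ι] {a b : ι}

/-- The factors `B, …, B, A, C, …, C` of a summand of an iterated coproduct, with `A` at place
`k`. -/
def skewFamily {T : Type*} (B A C : T) (k t : ι) : T :=
  if t < k then B else if t = k then A else C

variable [Fintype ι] [CommSemiring S] [Fintype α] [DecidableEq α] {X : Matrix (α × α) (α × α) S}
  {A B C : Matrix α α S}

theorem commute_piKronecker_skewFamily_add (hab : a ⋖ b) (h : Commute X (A ⊗ₖ C + B ⊗ₖ A)) :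
    Commute (pairKronecker hab.ne X 1)
      (piKronecker (skewFamily B A C a) + piKronecker (skewFamily B A C b)) := by
  have rest_eq (t : {t // t ≠ a ∧ t ≠ b}) : skewFamily B A C a t = skewFamily B A C b t := by
    have : (t : ι) < a ↔ (t : ι) < b := by
      rw [hab.lt_iff_le_left, t.2.1.le_iff_lt]
    simp only [skewFamily, this, t.2, if_false]
  have sum_eq : piKronecker (skewFamily B A C a) + piKronecker (skewFamily B A C b) =
      pairKronecker hab.ne (A ⊗ₖ C + B ⊗ₖ A) (piKronecker fun t => skewFamily B A C b t) := by
    simp only [add_pairKronecker, piKronecker_eq_pairKronecker hab.ne, rest_eq]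
    simp [skewFamily, hab.lt, hab.lt.not_gt, hab.ne']
  rw [sum_eq]
  exact commute_pairKronecker hab.ne h _

theorem commute_piKronecker_skewFamily_of_ne (hab : a ⋖ b) (hB : Commute X (B ⊗ₖ B))
    (hC : Commute X (C ⊗ₖ C)) {k : ι} (hka : k ≠ a) (hkb : k ≠ b) :
    Commute (pairKronecker hab.ne X 1) (piKronecker (skewFamily B A C k)) := by
  apply commute_piKronecker
  rcases hka.lt_or_gt with k_lt | lt_k
  · have k_lt_b : k < b := k_lt.trans hab.lt
    simpa only [skewFamily, k_lt.not_gt, k_lt.ne', k_lt_b.not_gt, k_lt_b.ne', if_false] using hC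
  · have b_lt_k : b < k := (hab.ge_of_gt lt_k).lt_of_ne' hkb
    simpa only [skewFamily, lt_k, b_lt_k, if_true] using hB

theorem commute_sum_piKronecker_skewFamily (hab : a ⋖ b) (hB : Commute X (B ⊗ₖ B))
    (hC : Commute X (C ⊗ₖ C)) (hA : Commute X (A ⊗ₖ C + B ⊗ₖ A)) :
    Commute (pairKronecker hab.ne X 1) (∑ k, piKronecker (skewFamily B A C k)) := by
  rw [sum_eq_add_add_sum_ne_and_ne hab.ne]
  exact (commute_piKronecker_skewFamily_add hab hA).add_right <| Commute.sum_right _ _ _ fun k _ =>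
    commute_piKronecker_skewFamily_of_ne hab hB hC k.2.1 k.2.2

end Coproduct

section RMatrix

variable {m : ℕ} {a b : Fin m}

theorem q_ne_zero : q ≠ 0 := RatFunc.X_ne_zero

theorem R0mat_mulVec_single_self (a : Fin m) :
    R0mat m *ᵥ Pi.single (a, a) 1 = q⁻¹ • Pi.single (a, a) 1 := by
  ext p
  simp [R0mat, Pi.single_apply]

theorem R0mat_mulVec_single_of_lt (h : a < b) :
    R0mat m *ᵥ Pi.single (a, b) 1 = Pi.single (b, a) 1 := by
  ext p
  simp [R0mat, Pi.single_apply, h.ne, h.not_gt, Prod.ext_iff]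

theorem R0mat_mulVec_single_of_gt (h : b < a) :
    R0mat m *ᵥ Pi.single (a, b) 1 = Pi.single (b, a) 1 + (q⁻¹ - q) • Pi.single (a, b) 1 := by
  ext p
  simp [R0mat, Pi.single_apply, h.ne', h, Prod.ext_iff]

theorem R0mat_transpose (m : ℕ) : (R0mat m)ᵀ = R0mat m := by
  ext ⟨a, b⟩ ⟨c, d⟩
  simp only [transpose_apply, R0mat, Prod.mk.injEq]
  grind

theorem commute_R0mat_diagonal_kronecker_diagonal (d : Fin m → K) :
    Commute (R0mat m) (diagonal d ⊗ₖ diagonal d) := by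
  rw [diagonal_kronecker_diagonal]
  ext ⟨a, b⟩ ⟨c, e⟩
  simp only [mul_diagonal, diagonal_mul, R0mat, Prod.mk.injEq]
  grind

theorem commute_R0mat_one_kronecker_one (m : ℕ) :
    Commute (R0mat m) ((1 : Matrix (Fin m) (Fin m) K) ⊗ₖ 1) := by
  rw [one_kronecker_one]
  exact Commute.one_right _

/-- The operator `Δ(E_j) = E_j ⊗ K_j⁻¹ + 1 ⊗ E_j` on `V ⊗ V`. -/
def coproductE (m j : ℕ) : Matrix (Fin m × Fin m) (Fin m × Fin m) K :=
  Emat m j ⊗ₖ KmatInv m j + 1 ⊗ₖ Emat m j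

theorem coproductE_mulVec_single {s t : Fin m} (hst : (t : ℕ) = s + 1) (a b : Fin m) :
    coproductE m s *ᵥ Pi.single (a, b) 1 =
      (if a = t then KmatInv m s b b • Pi.single (s, b) 1 else 0) +
        if b = t then Pi.single (a, s) 1 else 0 := by
  have Emat_apply (c d : Fin m) : Emat m s c d = if c = s ∧ d = t then 1 else 0 := by
    simp only [Emat, ← hst, Fin.val_inj]
  have KmatInv_apply_of_ne {c d : Fin m} (h : c ≠ d) : KmatInv m s c d = 0 :=
    diagonal_apply_ne _ h
  ext ⟨c, d⟩
  simp only [mulVec_single_one, col_apply, coproductE, Matrix.add_apply, kronecker_apply,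
    Emat_apply, one_apply, Pi.add_apply, ite_apply, Pi.smul_apply, Pi.zero_apply, Pi.single_apply,
    Prod.mk.injEq, smul_eq_mul]
  rcases eq_or_ne d b with rfl | hdb
  · grind
  · simp only [KmatInv_apply_of_ne hdb, hdb]
    grind

theorem R0mat_coproductE_mulVec_single_self {s t : Fin m} (hst : (t : ℕ) = s + 1) :
    R0mat m *ᵥ coproductE m s *ᵥ Pi.single (t, t) 1 =
      coproductE m s *ᵥ R0mat m *ᵥ Pi.single (t, t) 1 := by
  have s_lt_t : s < t := by omega
  have KmatInv_t : KmatInv m s t t = q := by simp [KmatInv, hst]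
  have coproductE_tt : coproductE m s *ᵥ Pi.single (t, t) 1 =
      q • Pi.single (s, t) 1 + Pi.single (t, s) 1 := by
    simp only [coproductE_mulVec_single hst, if_true, KmatInv_t]
  rw [R0mat_mulVec_single_self, mulVec_smul, coproductE_tt, mulVec_add, mulVec_smul,
    R0mat_mulVec_single_of_lt s_lt_t, R0mat_mulVec_single_of_gt s_lt_t, smul_add, smul_smul,
    inv_mul_cancel₀ q_ne_zero, one_smul, sub_smul]
  abel

theorem R0mat_coproductE_mulVec_single_lower {s t : Fin m} (hst : (t : ℕ) = s + 1) :
    (R0mat m *ᵥ coproductE m s *ᵥ Pi.single (t, s) 1 =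
      coproductE m s *ᵥ R0mat m *ᵥ Pi.single (t, s) 1) ∧
    R0mat m *ᵥ coproductE m s *ᵥ Pi.single (s, t) 1 =
      coproductE m s *ᵥ R0mat m *ᵥ Pi.single (s, t) 1 := by
  have s_lt_t : s < t := by omega
  have KmatInv_s : KmatInv m s s s = q⁻¹ := by simp [KmatInv]
  have coproductE_ts : coproductE m s *ᵥ Pi.single (t, s) 1 = q⁻¹ • Pi.single (s, s) 1 := by
    simp only [coproductE_mulVec_single hst, s_lt_t.ne, if_true, if_false, KmatInv_s, add_zero]
  have coproductE_st : coproductE m s *ᵥ Pi.single (s, t) 1 = Pi.single (s, s) 1 := by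
    simp only [coproductE_mulVec_single hst, s_lt_t.ne, if_true, if_false, zero_add]
  constructor
  · rw [R0mat_mulVec_single_of_gt s_lt_t, mulVec_add, mulVec_smul, coproductE_ts, coproductE_st,
      mulVec_smul, R0mat_mulVec_single_self, smul_smul, smul_smul, sub_mul,
      mul_inv_cancel₀ q_ne_zero, sub_smul, one_smul, add_sub_cancel]
  · rw [R0mat_mulVec_single_of_lt s_lt_t, coproductE_ts, coproductE_st, R0mat_mulVec_single_self]

theorem R0mat_coproductE_mulVec_single_of_ne {s t c : Fin m} (hst : (t : ℕ) = s + 1)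
    (hcs : c ≠ s) (hct : c ≠ t) :
    (R0mat m *ᵥ coproductE m s *ᵥ Pi.single (t, c) 1 =
      coproductE m s *ᵥ R0mat m *ᵥ Pi.single (t, c) 1) ∧
    R0mat m *ᵥ coproductE m s *ᵥ Pi.single (c, t) 1 =
      coproductE m s *ᵥ R0mat m *ᵥ Pi.single (c, t) 1 := by
  have KmatInv_c : KmatInv m s c c = 1 := by
    simp [KmatInv, ← hst, Fin.val_inj, hcs, hct]
  have coproductE_tc : coproductE m s *ᵥ Pi.single (t, c) 1 = Pi.single (s, c) 1 := by
    simp only [coproductE_mulVec_single hst, hct, if_true, if_false, KmatInv_c, one_smul, add_zero]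
  have coproductE_ct : coproductE m s *ᵥ Pi.single (c, t) 1 = Pi.single (c, s) 1 := by
    simp only [coproductE_mulVec_single hst, hct, if_true, if_false, zero_add]
  rcases hcs.lt_or_gt with c_lt_s | s_lt_c
  · have c_lt_t : c < t := by omega
    simp only [R0mat_mulVec_single_of_lt c_lt_t, R0mat_mulVec_single_of_gt c_lt_t, mulVec_add,
      mulVec_smul, coproductE_tc, coproductE_ct, R0mat_mulVec_single_of_lt c_lt_s,
      R0mat_mulVec_single_of_gt c_lt_s, and_self]
  · have t_lt_c : t < c := by omega
    simp only [R0mat_mulVec_single_of_lt t_lt_c, R0mat_mulVec_single_of_gt t_lt_c, mulVec_add,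
      mulVec_smul, coproductE_tc, coproductE_ct, R0mat_mulVec_single_of_lt s_lt_c,
      R0mat_mulVec_single_of_gt s_lt_c, and_self]

theorem coproductE_R0mat_mulVec_single_of_ne {s t a b : Fin m} (hst : (t : ℕ) = s + 1)
    (ha : a ≠ t) (hb : b ≠ t) :
    coproductE m s *ᵥ R0mat m *ᵥ Pi.single (a, b) 1 = 0 := by
  rcases lt_trichotomy a b with a_lt_b | rfl | b_lt_a
  · simp only [R0mat_mulVec_single_of_lt a_lt_b, coproductE_mulVec_single hst, ha, hb, if_false,
      add_zero]
  · simp only [R0mat_mulVec_single_self, mulVec_smul, coproductE_mulVec_single hst, ha, if_false,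
      add_zero, smul_zero]
  · simp only [R0mat_mulVec_single_of_gt b_lt_a, mulVec_add, mulVec_smul,
      coproductE_mulVec_single hst, ha, hb, if_false, add_zero, smul_zero]

theorem commute_R0mat_coproductE {j : ℕ} (hj : j + 1 < m) :
    Commute (R0mat m) (coproductE m j) := by
  obtain ⟨s, rfl⟩ : ∃ s : Fin m, (s : ℕ) = j := ⟨⟨j, Nat.lt_of_succ_lt hj⟩, rfl⟩
  obtain ⟨t, hst⟩ : ∃ t : Fin m, (t : ℕ) = s + 1 := ⟨⟨s + 1, hj⟩, rfl⟩
  refine ext_of_mulVec_single fun ⟨a, b⟩ => ?_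
  rw [← mulVec_mulVec, ← mulVec_mulVec]
  by_cases ha : a = t <;> by_cases hb : b = t
  · rw [ha, hb, R0mat_coproductE_mulVec_single_self hst]
  · subst ha
    rcases eq_or_ne b s with rfl | hbs
    · exact (R0mat_coproductE_mulVec_single_lower hst).1
    · exact (R0mat_coproductE_mulVec_single_of_ne hst hbs hb).1
  · subst hb
    rcases eq_or_ne a s with rfl | has
    · exact (R0mat_coproductE_mulVec_single_lower hst).2
    · exact (R0mat_coproductE_mulVec_single_of_ne hst has ha).2
  · rw [coproductE_R0mat_mulVec_single_of_ne hst ha hb, coproductE_mulVec_single hst, if_neg ha,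
      if_neg hb, add_zero, mulVec_zero]

/-- The operator `Δ(F_j) = F_j ⊗ 1 + K_j ⊗ F_j` on `V ⊗ V`. -/
def coproductF (m j : ℕ) : Matrix (Fin m × Fin m) (Fin m × Fin m) K :=
  Fmat m j ⊗ₖ 1 + Kmat m j ⊗ₖ Fmat m j

theorem coproductF_transpose (m j : ℕ) :
    (coproductF m j)ᵀ = q • (coproductE m j * (Kmat m j ⊗ₖ Kmat m j)) := by
  have KmatInv_mul_Kmat : KmatInv m j * Kmat m j = 1 := by
    rw [KmatInv, Kmat, diagonal_mul_diagonal, ← diagonal_one]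
    congr 1
    ext t
    split_ifs <;> simp [q_ne_zero]
  have Emat_mul_Kmat : Emat m j * Kmat m j = q⁻¹ • Emat m j := by
    ext a b
    simp only [Kmat, Emat, mul_diagonal, Matrix.smul_apply, smul_eq_mul]
    grind
  have Fmat_transpose : (Fmat m j)ᵀ = Emat m j := by
    ext a b
    simp only [transpose_apply, Fmat, Emat, and_comm]
  have Kmat_transpose : (Kmat m j)ᵀ = Kmat m j := diagonal_transpose _
  calc (coproductF m j)ᵀ
    _ = Emat m j ⊗ₖ 1 + Kmat m j ⊗ₖ Emat m j := by
      rw [coproductF, transpose_add, ← kroneckerMap_transpose, ← kroneckerMap_transpose,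
        Fmat_transpose, Kmat_transpose, transpose_one]
    _ = q • (q⁻¹ • Emat m j ⊗ₖ 1 + Kmat m j ⊗ₖ (q⁻¹ • Emat m j)) := by
      rw [kronecker_smul, ← smul_add, smul_smul, mul_inv_cancel₀ q_ne_zero, one_smul]
    _ = q • (coproductE m j * (Kmat m j ⊗ₖ Kmat m j)) := by
      rw [coproductE, add_mul, ← mul_kronecker_mul, ← mul_kronecker_mul, Emat_mul_Kmat,
        KmatInv_mul_Kmat, one_mul, smul_kronecker]

theorem commute_R0mat_coproductF {j : ℕ} (hj : j + 1 < m) :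
    Commute (R0mat m) (coproductF m j) := by
  have commute_transpose : Commute (R0mat m)ᵀ (coproductF m j)ᵀ := by
    rw [coproductF_transpose, R0mat_transpose]
    exact ((commute_R0mat_coproductE hj).mul_right
      (commute_R0mat_diagonal_kronecker_diagonal _)).smul_right q
  rw [commute_iff_eq, ← transpose_inj, transpose_mul, transpose_mul, commute_transpose.eq]

end RMatrix

section Operators

variable {m N : ℕ}

theorem place_eq_piKronecker (B A C : Matrix (Fin m) (Fin m) K) (k : Fin N) :
    place m N B A C k = piKronecker (skewFamily B A C k) := by
  ext f g
  refine Finset.prod_congr rfl fun t _ => ?_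
  simp only [skewFamily]
  split_ifs <;> rfl

theorem kpow_eq_piKronecker (A : Matrix (Fin m) (Fin m) K) :
    kpow m N A = piKronecker fun _ => A :=
  rfl

theorem mk_covBy_mk_succ {i : ℕ} (hi : i + 1 < N) :
    (⟨i, Nat.lt_of_succ_lt hi⟩ : Fin N) ⋖ ⟨i + 1, hi⟩ := by
  simp

theorem Rop0_eq_pairKronecker {i : ℕ} (hi : i + 1 < N) :
    Rop0 m N i hi = pairKronecker (mk_covBy_mk_succ hi).ne (R0mat m) 1 := by
  ext f g
  rw [← piKronecker_one, Rop0, prod_eq_mul_mul_prod_ne_and_ne (mk_covBy_mk_succ hi).ne]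
  simp only [true_or, or_true, if_true, one_mul]
  refine congrArg _ (Finset.prod_congr rfl fun t _ => if_neg ?_)
  simpa only [not_or, ne_eq, Fin.ext_iff] using t.2

end Operators

/-- The Hecke-algebra and quantum-group actions on `V^{⊗N}` commute (the easy
half of quantum Schur–Weyl duality): each Hecke operator `R_i` commutes with
each of `Δ^{(N)}(E_j)`, `Δ^{(N)}(F_j)` (`1 ≤ j ≤ m-1`, here 0-based
`j + 1 < m`) and `Δ^{(N)}(L_l) = L_l^{⊗N}` (`1 ≤ l ≤ m`, here 0-based
`l < m`). -/
theorem schur_weyl_actions_commute (m N : ℕ) (hN : 2 ≤ N)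
    (i : ℕ) (hi : i + 1 < N) :
    (∀ j : ℕ, j + 1 < m →
      Rop0 m N i hi * DeltaEN m N j = DeltaEN m N j * Rop0 m N i hi ∧
      Rop0 m N i hi * DeltaFN m N j = DeltaFN m N j * Rop0 m N i hi) ∧
    (∀ l : ℕ, l < m →
      Rop0 m N i hi * kpow m N (Lmat m l) = kpow m N (Lmat m l) * Rop0 m N i hi) := by
  rw [Rop0_eq_pairKronecker hi]
  refine ⟨fun j hj => ⟨?_, ?_⟩, fun l _ => ?_⟩
  · simp only [DeltaEN, place_eq_piKronecker]
    exact commute_sum_piKronecker_skewFamily (mk_covBy_mk_succ hi)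
      (commute_R0mat_one_kronecker_one m) (commute_R0mat_diagonal_kronecker_diagonal _)
      (commute_R0mat_coproductE hj)
  · simp only [DeltaFN, place_eq_piKronecker]
    exact commute_sum_piKronecker_skewFamily (mk_covBy_mk_succ hi)
      (commute_R0mat_diagonal_kronecker_diagonal _) (commute_R0mat_one_kronecker_one m)
      (commute_R0mat_coproductF hj)
  · rw [kpow_eq_piKronecker]
    exact commute_piKronecker _ (commute_R0mat_diagonal_kronecker_diagonal _)
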